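/- arXiv:2604.10310 — 3 statements merged into one kernel-verified Lean document; each statement's English description precedes it below -/
import Mathlib

section
/- Let ν be a Borel probability measure on ℝ with finite moments of all orders satisfying Carleman's condition Σ_{m≥1} (∫ |t|^{2m} dν(t))^{-1/(2m)} = ∞. Then ν is uniquely determined by its moments: any Borel probability measure on ℝ with the same moments of all orders equals ν. -/
open MeasureTheory Filter
open scoped InnerProductSpace ENNReal Topology BigOperators

/-- Weak convergence of a sequence of measures: convergence of integrals of all
bounded continuous functions. -/
def WeakTendsto {E : Type*} [MeasurableSpace E] [TopologicalSpace E]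
    (μ : ℕ → Measure E) (ν : Measure E) : Prop :=
  ∀ f : BoundedContinuousFunction E ℝ,
    Tendsto (fun n => ∫ x, f x ∂(μ n)) atTop (𝓝 (∫ x, f x ∂ν))

/-- Carleman's condition for a measure on ℝ: the series of reciprocal (2m)-th
roots of the even absolute moments diverges. -/
def Carleman (ν : Measure ℝ) : Prop :=
  ¬ Summable (fun m : ℕ =>
    (∫ t, |t| ^ (2 * (m + 1)) ∂ν) ^ (-(1 / (2 * (m + 1) : ℝ))))

lemma ratio_mono (M : ℕ → ℝ) (hpos : ∀ k, 0 < M k)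
    (hlog : ∀ k, M (k+1) ^ 2 ≤ M k * M (k+2)) : Monotone (fun k => M (k+1) / M k) := by
  apply monotone_nat_of_le_succ
  intro k
  rw [div_le_div_iff₀ (hpos _) (hpos _)]
  nlinarith [hlog k]

lemma bang_step (F : ℕ → ℝ → ℂ) (M : ℕ → ℝ) (hpos : ∀ k, 0 < M k)
    (hlog : ∀ k, M (k+1) ^ 2 ≤ M k * M (k+2))
    (hder : ∀ k x, HasDerivAt (F k) (F (k+1) x) x)
    (hb : ∀ k x, ‖F k x‖ ≤ M k) (N : ℕ) (x : ℝ)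
    (hx : ∀ k, ‖F k x‖ ≤ Real.exp (k - (N+1)) * M k) (j : ℕ) :
    ∀ k, k + j = N + 1 → ∀ h, 0 ≤ h → ‖F k (x + h)‖ ≤
      Real.exp (k - (N+1)) * M k * Real.exp (Real.exp 1 * (M (N+1) / M N) * h) := by
  induction j with
  | zero =>
    intro k hk h hh
    obtain rfl : k = N + 1 := by omega
    have h1 : 1 ≤ Real.exp (Real.exp 1 * (M (N+1) / M N) * h) := by
      apply Real.one_le_exp
      have := hpos (N+1)
      have := hpos N
      positivity
    have h2 := hb (N+1) (x+h)
    have h3 := hpos (N+1)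
    push_cast
    simp only [sub_self, Real.exp_zero, one_mul]
    nlinarith
  | succ j ih =>
    intro k hk h hh
    set a := Real.exp 1 * (M (N+1) / M N) with ha
    have hr : M (k+1) ≤ (M (N+1) / M N) * M k := by
      have := ratio_mono M hpos hlog (show k ≤ N by omega)
      simp only at this
      rwa [div_le_iff₀ (hpos k)] at this
    have key := image_norm_le_of_norm_deriv_right_le_deriv_boundary
      (f := fun s => F k (x + s)) (f' := fun s => F (k+1) (x + s)) (a := 0) (b := h)
      (B := fun s => Real.exp (k - (N+1)) * M k * Real.exp (a * s))
      (B' := fun s => Real.exp (k - (N+1)) * M k * (Real.exp (a * s) * (a * 1)))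
      (fun s _ => ((hder k (x+s)).comp_const_add x s).continuousAt.continuousWithinAt)
      (fun s _ => ((hder k (x+s)).comp_const_add x s).hasDerivWithinAt)
      (by simpa using hx k)
      (fun s => (((hasDerivAt_id s).const_mul a).exp).const_mul _)
      (fun s hs => by
        have h1 := ih (k+1) (by omega) s hs.1
        refine h1.trans ?_
        have : Real.exp (((k+1 : ℕ):ℝ) - (N+1)) = Real.exp (k - (N+1)) * Real.exp 1 := by
          rw [← Real.exp_add]; push_cast; congr 1; ring
        rw [this]
        calc Real.exp (k - (N+1)) * Real.exp 1 * M (k+1) * Real.exp (a * s)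
            ≤ Real.exp (k - (N+1)) * Real.exp 1 * ((M (N+1) / M N) * M k) * Real.exp (a * s) := by
              gcongr
          _ = _ := by rw [ha]; ring)
    exact key ⟨hh, le_rfl⟩

lemma bang_step' (F : ℕ → ℝ → ℂ) (M : ℕ → ℝ) (hpos : ∀ k, 0 < M k)
    (hlog : ∀ k, M (k+1) ^ 2 ≤ M k * M (k+2))
    (hder : ∀ k x, HasDerivAt (F k) (F (k+1) x) x)
    (hb : ∀ k x, ‖F k x‖ ≤ M k) (N : ℕ) (x : ℝ)
    (hx : ∀ k, ‖F k x‖ ≤ Real.exp (k - (N+1)) * M k) (h : ℝ) (hh : 0 ≤ h)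
    (hh' : Real.exp 1 * h ≤ M N / M (N+1)) (k : ℕ) :
    ‖F k (x + h)‖ ≤ Real.exp (k - N) * M k := by
  have hN := hpos N
  have hN1 := hpos (N+1)
  have hk0 := hpos k
  rcases le_or_gt k (N+1) with hk | hk
  · refine (bang_step F M hpos hlog hder hb N x hx (N+1-k) k (by omega) h hh).trans ?_
    have : Real.exp ((k:ℝ) - N) = Real.exp (k - (N+1)) * Real.exp 1 := by
      rw [← Real.exp_add]; congr 1; ring
    rw [this]
    have h2 : Real.exp 1 * (M (N+1) / M N) * h ≤ 1 := by
      rw [le_div_iff₀ hN1] at hh'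
      have : Real.exp 1 * (M (N+1) / M N) * h = (Real.exp 1 * h * M (N+1)) / M N := by ring
      rw [this, div_le_one hN]; exact hh'
    calc _ ≤ Real.exp (k - (N+1)) * M k * Real.exp 1 := by gcongr
      _ = _ := by ring
  · refine (hb k _).trans ?_
    have : (1:ℝ) ≤ Real.exp (k - N) := by
      apply Real.one_le_exp
      have : (N:ℝ) + 1 < k := by exact_mod_cast hk
      linarith
    nlinarith

lemma bang_iter (F : ℕ → ℝ → ℂ) (M : ℕ → ℝ) (hpos : ∀ k, 0 < M k)
    (hlog : ∀ k, M (k+1) ^ 2 ≤ M k * M (k+2))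
    (hder : ∀ k x, HasDerivAt (F k) (F (k+1) x) x)
    (hb : ∀ k x, ‖F k x‖ ≤ M k) (h0 : ∀ k, F k 0 = 0) (d : ℕ) :
    ∀ (p : ℕ) (x : ℝ), 0 ≤ x →
      Real.exp 1 * x ≤ ∑ i ∈ Finset.range d, M (p+i) / M (p+i+1) →
      ∀ k, ‖F k x‖ ≤ Real.exp (k - p) * M k := by
  induction d with
  | zero =>
    intro p x hx hx' k
    have : x = 0 := by
      have := Real.exp_pos 1
      simp at hx'
      nlinarith
    subst this
    rw [h0]
    have := hpos k
    simp; positivity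
  | succ d ih =>
    intro p x hx hx' k
    rw [Finset.sum_range_succ'] at hx'
    have hp := hpos p
    have hp1 := hpos (p+1)
    have he := Real.exp_pos 1
    set h := min x (M p / M (p+1) / Real.exp 1) with hh
    have hh0 : 0 ≤ h := le_min hx (by positivity)
    have hhx : h ≤ x := min_le_left _ _
    have hh1 : Real.exp 1 * h ≤ M p / M (p+1) := by
      have : h ≤ M p / M (p+1) / Real.exp 1 := min_le_right _ _
      rw [le_div_iff₀ he] at this; linarith
    have hrest : Real.exp 1 * (x - h) ≤ ∑ i ∈ Finset.range d, M (p+1+i) / M (p+1+i+1) := by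
      rcases le_total x (M p / M (p+1) / Real.exp 1) with hc | hc
      · rw [hh, min_eq_left hc]; simp
        exact Finset.sum_nonneg fun i _ => (div_pos (hpos _) (hpos _)).le
      · rw [hh, min_eq_right hc]
        have e1 : Real.exp 1 * (M p / M (p+1) / Real.exp 1) = M p / M (p+1) := by field_simp
        rw [mul_sub, e1]
        simp only [add_zero] at hx'
        have : ∑ i ∈ Finset.range d, M (p+1+i) / M (p+1+i+1) = ∑ i ∈ Finset.range d, M (p+(i+1)) / M (p+(i+1)+1) := by
          refine Finset.sum_congr rfl fun i _ => ?_
          rw [show p+1+i = p+(i+1) by ring]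
        rw [this]; linarith
    have h1 := ih (p+1) (x-h) (by linarith) hrest
    push_cast at h1
    have := bang_step' F M hpos hlog hder hb p (x-h) h1 h hh0 hh1 k
    simpa using this

lemma bang (F : ℕ → ℝ → ℂ) (M : ℕ → ℝ) (hpos : ∀ k, 0 < M k)
    (hlog : ∀ k, M (k+1) ^ 2 ≤ M k * M (k+2))
    (hder : ∀ k x, HasDerivAt (F k) (F (k+1) x) x)
    (hb : ∀ k x, ‖F k x‖ ≤ M k) (h0 : ∀ k, F k 0 = 0)
    (hdiv : ¬ Summable (fun n => M n / M (n+1))) (x : ℝ) (hx : 0 ≤ x) : F 0 x = 0 := by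
  have hb2 : ∀ p : ℕ, ‖F 0 x‖ ≤ Real.exp (-(p:ℝ)) * M 0 := by
    intro p
    have hdiv' : ¬ Summable (fun n => M (n+p) / M (n+p+1)) := by
      rwa [summable_nat_add_iff (f := fun n => M n / M (n+1)) p]
    have ht := (not_summable_iff_tendsto_nat_atTop_of_nonneg
      (fun n => (div_pos (hpos (n+p)) (hpos (n+p+1))).le)).1 hdiv'
    obtain ⟨d, hd⟩ := (ht.eventually_ge_atTop (Real.exp 1 * x)).exists
    have := bang_iter F M hpos hlog hder hb h0 d p x hx (by
      simpa only [add_comm p] using hd) 0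
    simpa using this
  have ht : Tendsto (fun p : ℕ => Real.exp (-(p:ℝ)) * M 0) atTop (𝓝 (0 * M 0)) :=
    (Real.tendsto_exp_neg_atTop_nhds_zero.comp tendsto_natCast_atTop_atTop).mul_const _
  rw [zero_mul] at ht
  have := ge_of_tendsto' ht hb2
  exact norm_le_zero_iff.1 this

lemma carleman_term (a : ℕ → ℝ) (ha : ∀ n, 0 < a n) (n : ℕ) :
    (∏ j ∈ Finset.range (n+1), a j) ^ (1 / ((n:ℝ)+1)) ≤
      Real.exp 1 * ((∑ j ∈ Finset.range (n+1), ((j:ℝ)+1) * a j) / ((n:ℝ)+1)^2) := by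
  have hn : (0:ℝ) < (n:ℝ)+1 := by positivity
  have h1 := Real.geom_mean_le_arith_mean (Finset.range (n+1)) (fun _ => 1)
    (fun j => ((j:ℝ)+1) * a j) (by simp) (by simp; positivity)
    (fun j _ => by have := ha j; positivity)
  simp only [Real.rpow_one, Finset.sum_const, Finset.card_range, nsmul_eq_mul, mul_one, one_mul,
    Finset.prod_mul_distrib] at h1
  have hf : ∏ j ∈ Finset.range (n+1), ((j:ℝ)+1) = ((n+1).factorial : ℝ) := by
    rw [← Finset.prod_range_add_one_eq_factorial]; push_cast; rfl
  have hP : 0 ≤ ∏ j ∈ Finset.range (n+1), a j := Finset.prod_nonneg fun j _ => (ha j).le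
  rw [hf, Real.mul_rpow (by positivity) hP] at h1
  have h2 : ((n:ℝ)+1) / Real.exp 1 ≤ ((n+1).factorial : ℝ) ^ (((n+1:ℕ):ℝ)⁻¹) := by
    have h3 := Real.pow_div_factorial_le_exp (x := (n:ℝ)+1) hn.le (n+1)
    have h4 : (((n:ℝ)+1) / Real.exp 1)^(n+1) ≤ ((n+1).factorial : ℝ) := by
      rw [div_pow, ← Real.exp_nat_mul]
      rw [div_le_iff₀ (by positivity)] at h3
      rw [div_le_iff₀ (by positivity)]
      push_cast
      rw [mul_one, mul_comm]; exact h3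
    calc ((n:ℝ)+1) / Real.exp 1 = ((((n:ℝ)+1) / Real.exp 1)^(n+1)) ^ (((n+1:ℕ):ℝ)⁻¹) := by
          rw [Real.pow_rpow_inv_natCast (by positivity) (by omega)]
      _ ≤ _ := by gcongr
  push_cast at h1 h2
  rw [one_div]
  set g := (∏ j ∈ Finset.range (n+1), a j) ^ ((n:ℝ)+1)⁻¹ with hg
  have hg0 : 0 ≤ g := Real.rpow_nonneg hP _
  have h5 : ((n:ℝ)+1) / Real.exp 1 * g ≤
      (∑ j ∈ Finset.range (n+1), ((j:ℝ)+1) * a j) / ((n:ℝ)+1) :=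
    (mul_le_mul_of_nonneg_right h2 hg0).trans h1
  have he := Real.exp_pos 1
  calc g = Real.exp 1 / ((n:ℝ)+1) * (((n:ℝ)+1) / Real.exp 1 * g) := by field_simp
    _ ≤ Real.exp 1 / ((n:ℝ)+1) * ((∑ j ∈ Finset.range (n+1), ((j:ℝ)+1) * a j) / ((n:ℝ)+1)) := by
        gcongr
    _ = _ := by field_simp

lemma carleman_partial (a : ℕ → ℝ) (ha : ∀ n, 0 < a n) (N : ℕ) :
    ∑ n ∈ Finset.range N, (∑ j ∈ Finset.range (n+1), ((j:ℝ)+1) * a j) / ((n:ℝ)+1)^2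
      + 2 * (∑ j ∈ Finset.range N, ((j:ℝ)+1) * a j) / ((N:ℝ)+1) ≤
    2 * ∑ j ∈ Finset.range N, a j := by
  induction N with
  | zero => simp
  | succ N ih =>
    rw [Finset.sum_range_succ _ N, Finset.sum_range_succ a]
    set T := ∑ n ∈ Finset.range N, (∑ j ∈ Finset.range (n+1), ((j:ℝ)+1) * a j) / ((n:ℝ)+1)^2
    have hS : ∑ j ∈ Finset.range (N+1), ((j:ℝ)+1) * a j =
      ∑ j ∈ Finset.range N, ((j:ℝ)+1) * a j + ((N:ℝ)+1) * a N := Finset.sum_range_succ _ N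
    set S := ∑ j ∈ Finset.range (N+1), ((j:ℝ)+1) * a j
    have hS0 : 0 ≤ S := Finset.sum_nonneg fun j _ => by have := ha j; positivity
    set S' := ∑ j ∈ Finset.range N, ((j:ℝ)+1) * a j
    have hN : (0:ℝ) < (N:ℝ)+1 := by positivity
    have e1 : 2 * S' / ((N:ℝ)+1) = 2 * S / ((N:ℝ)+1) - 2 * a N := by
      rw [hS]; field_simp; ring
    have e2 : S / ((N:ℝ)+1)^2 + 2 * S / (((N+1:ℕ):ℝ)+1) ≤ 2 * S / ((N:ℝ)+1) := by
      have hN0 : (0:ℝ) ≤ N := by positivity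
      have : 2 * S / ((N:ℝ)+1) - (S / ((N:ℝ)+1)^2 + 2 * S / (((N+1:ℕ):ℝ)+1)) =
        S * N / (((N:ℝ)+1)^2 * ((N:ℝ)+2)) := by
        push_cast; field_simp; ring
      have : 0 ≤ S * N / (((N:ℝ)+1)^2 * ((N:ℝ)+2)) := by positivity
      linarith
    linarith

lemma carleman_summable (M : ℕ → ℝ) (hpos : ∀ k, 0 < M k)
    (hs : Summable (fun n => M n / M (n+1))) :
    Summable (fun n : ℕ => (M (n+1) / M 0) ^ (-(1 / ((n:ℝ)+1)))) := by
  set a : ℕ → ℝ := fun n => M n / M (n+1) with ha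
  have ha0 : ∀ n, 0 < a n := fun n => div_pos (hpos _) (hpos _)
  have hprod : ∀ n, ∏ j ∈ Finset.range n, a j = M 0 / M n := by
    intro n
    induction n with
    | zero => simp [(hpos 0).ne']
    | succ n ih =>
      rw [Finset.prod_range_succ, ih, ha]
      have := (hpos n).ne'
      have := (hpos (n+1)).ne'
      field_simp
  have hS : Summable (fun n : ℕ =>
      (∑ j ∈ Finset.range (n+1), ((j:ℝ)+1) * a j) / ((n:ℝ)+1)^2) := by
    refine summable_of_sum_range_le (c := 2 * ∑' n, a n) (fun n => ?_) (fun N => ?_)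
    · exact div_nonneg (Finset.sum_nonneg fun j _ => by have := ha0 j; positivity) (by positivity)
    · have h1 := carleman_partial a ha0 N
      have h2 := hs.sum_le_tsum (Finset.range N) (fun j _ => (ha0 j).le)
      have h3 : 0 ≤ 2 * (∑ j ∈ Finset.range N, ((j:ℝ)+1) * a j) / ((N:ℝ)+1) :=
        div_nonneg (mul_nonneg (by norm_num)
          (Finset.sum_nonneg fun j _ => by have := ha0 j; positivity)) (by positivity)
      linarith
  refine Summable.of_nonneg_of_le (fun n => ?_) (fun n => ?_) (hS.mul_left (Real.exp 1))
  · exact Real.rpow_nonneg (div_pos (hpos _) (hpos _)).le _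
  · refine le_trans (le_of_eq ?_) (carleman_term a ha0 n)
    rw [hprod, Real.rpow_neg (div_pos (hpos _) (hpos _)).le,
      ← Real.inv_rpow (div_pos (hpos _) (hpos _)).le, inv_div]

/-- Derivatives of the characteristic function. -/
noncomputable def cfDer (μ : Measure ℝ) (k : ℕ) (x : ℝ) : ℂ :=
  ∫ t, ((t:ℂ) * Complex.I) ^ k * Complex.exp (x * t * Complex.I) ∂μ

lemma norm_cf (k : ℕ) (x t : ℝ) :
    ‖((t:ℂ) * Complex.I) ^ k * Complex.exp (x * t * Complex.I)‖ = |t| ^ k := by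
  rw [norm_mul, ← Complex.ofReal_mul, Complex.norm_exp_ofReal_mul_I]
  simp

lemma cf_meas (μ : Measure ℝ) (k : ℕ) (x : ℝ) : AEStronglyMeasurable
    (fun t : ℝ => ((t:ℂ) * Complex.I) ^ k * Complex.exp (x * t * Complex.I)) μ := by
  apply Continuous.aestronglyMeasurable
  fun_prop

lemma cf_int (μ : Measure ℝ) (hm : ∀ m : ℕ, Integrable (fun t : ℝ => |t| ^ m) μ) (k : ℕ) (x : ℝ) :
    Integrable (fun t : ℝ => ((t:ℂ) * Complex.I) ^ k * Complex.exp (x * t * Complex.I)) μ :=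
  (hm k).mono' (cf_meas μ k x) (ae_of_all _ fun t => (norm_cf k x t).le)

lemma cfDer_hasDerivAt (μ : Measure ℝ) (hm : ∀ m : ℕ, Integrable (fun t : ℝ => |t| ^ m) μ)
    (k : ℕ) (x : ℝ) : HasDerivAt (cfDer μ k) (cfDer μ (k+1) x) x := by
  refine (hasDerivAt_integral_of_dominated_loc_of_deriv_le (s := Set.univ)
    (F := fun (x : ℝ) (t : ℝ) => ((t:ℂ) * Complex.I) ^ k * Complex.exp (x * t * Complex.I))
    (F' := fun (x : ℝ) (t : ℝ) => ((t:ℂ) * Complex.I) ^ (k+1) * Complex.exp (x * t * Complex.I))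
    (bound := fun t => |t| ^ (k+1)) Filter.univ_mem
    (Eventually.of_forall fun y => cf_meas μ k y) (cf_int μ hm k x) (cf_meas μ (k+1) x)
    (ae_of_all _ fun t y _ => (norm_cf (k+1) y t).le) (hm (k+1)) (ae_of_all _ fun t y _ => ?_)).2
  have h1 : HasDerivAt (fun y : ℝ => (y:ℂ) * t * Complex.I) (1 * t * Complex.I) y :=
    ((Complex.ofRealCLM.hasDerivAt (x := y)).mul_const (t:ℂ)).mul_const Complex.I
  have h2 := h1.cexp.const_mul (((t:ℂ) * Complex.I) ^ k)
  refine h2.congr_deriv ?_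
  ring

lemma cfDer_bound (μ : Measure ℝ) (k : ℕ) (x : ℝ) : ‖cfDer μ k x‖ ≤ ∫ t, |t| ^ k ∂μ := by
  refine (norm_integral_le_integral_norm _).trans (le_of_eq ?_)
  simp_rw [norm_cf]

lemma cfDer_zero (μ : Measure ℝ) (k : ℕ) :
    cfDer μ k 0 = Complex.I ^ k * ((∫ t, t ^ k ∂μ : ℝ) : ℂ) := by
  unfold cfDer
  rw [← integral_complex_ofReal, ← integral_const_mul]
  congr 1
  ext t
  simp [mul_pow, mul_comm]

theorem stmt9 (ν : Measure ℝ) [IsProbabilityMeasure ν]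
    (hmom : ∀ m : ℕ, Integrable (fun t => |t| ^ m) ν)
    (hcar : Carleman ν) :
    ∀ μ : Measure ℝ, IsProbabilityMeasure μ →
      (∀ m : ℕ, Integrable (fun t => |t| ^ m) μ) →
      (∀ m : ℕ, (∫ t, t ^ m ∂μ) = ∫ t, t ^ m ∂ν) → μ = ν := by
  intro μ hμ hmomμ heq
  have hmomρ : ∀ m : ℕ, Integrable (fun t : ℝ => |t| ^ m) (μ + ν) :=
    fun m => (hmomμ m).add_measure (hmom m)
  set M : ℕ → ℝ := fun k => ∫ t, |t| ^ k ∂(μ + ν) with hM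
  have hMadd : ∀ k, M k = ∫ t, |t| ^ k ∂μ + ∫ t, |t| ^ k ∂ν := fun k =>
    integral_add_measure (hmomμ k) (hmom k)
  have hM0 : M 0 = 2 := by rw [hMadd]; simp; norm_num
  have hMeven : ∀ m, M (2 * m) = 2 * ∫ t, |t| ^ (2 * m) ∂ν := by
    intro m
    rw [hMadd]
    have h1 : ∀ t : ℝ, |t| ^ (2 * m) = t ^ (2 * m) := fun t => by
      rw [pow_mul, sq_abs, ← pow_mul]
    simp_rw [h1]
    rw [heq]; ring
  have hpos : ∀ k, 0 < M k := by
    intro k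
    have h0 : 0 ≤ M k := integral_nonneg fun t => by positivity
    refine lt_of_le_of_ne h0 fun hk => hcar ?_
    have hk' := (integral_eq_zero_iff_of_nonneg (fun t => by positivity) (hmomρ k)).1 hk.symm
    have hk0 : k ≠ 0 := by
      rintro rfl
      rw [hM0] at hk
      norm_num at hk
    have hν : ∀ᵐ t ∂ν, |t| = 0 := by
      have := (ae_add_measure_iff.1 hk').2
      filter_upwards [this] with t ht
      exact (pow_eq_zero_iff hk0).1 ht
    have hz : ∀ m : ℕ, ∫ t, |t| ^ (2 * (m+1)) ∂ν = 0 := by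
      intro m
      rw [← integral_zero ℝ ℝ (μ := ν)]
      refine integral_congr_ae ?_
      filter_upwards [hν] with t ht
      rw [ht]; simp
    convert summable_zero using 1
    ext m
    rw [hz, Real.zero_rpow]
    have : (0:ℝ) < 2 * ((m:ℝ)+1) := by positivity
    exact neg_ne_zero.2 (one_div_pos.2 this).ne'
  have hlog : ∀ k, M (k+1) ^ 2 ≤ M k * M (k+2) := by
    intro k
    set s := M (k+1) / M k with hs
    have h1 : 0 ≤ ∫ t, |t| ^ k * (s - |t|) ^ 2 ∂(μ + ν) :=
      integral_nonneg fun t => by positivity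
    have h2 : ∫ t, |t| ^ k * (s - |t|) ^ 2 ∂(μ + ν) = s^2 * M k - 2 * s * M (k+1) + M (k+2) := by
      have : ∀ t : ℝ, |t| ^ k * (s - |t|) ^ 2 =
        s^2 * |t| ^ k - 2 * s * |t| ^ (k+1) + |t| ^ (k+2) := fun t => by ring
      simp_rw [this]
      have hi : Integrable (fun t : ℝ => s^2 * |t| ^ k - 2 * s * |t| ^ (k+1)) (μ + ν) :=
        ((hmomρ k).const_mul _).sub ((hmomρ (k+1)).const_mul _)
      rw [integral_add hi (hmomρ (k+2)),
        integral_sub ((hmomρ k).const_mul _) ((hmomρ (k+1)).const_mul _),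
        integral_const_mul, integral_const_mul]
    rw [h2] at h1
    have hk := hpos k
    have h3 : s * M k = M (k+1) := by rw [hs]; field_simp
    nlinarith [mul_nonneg hk.le h1]
  have hdiv : ¬ Summable (fun n => M n / M (n+1)) := by
    intro hs
    apply hcar
    have h1 := carleman_summable M hpos hs
    have h2 := h1.comp_injective (i := fun m : ℕ => 2 * m + 1) (fun a b h => by simpa using h)
    refine (summable_congr fun m => ?_).2 h2
    simp only [Function.comp]
    rw [show 2 * m + 1 + 1 = 2 * (m+1) by ring, hMeven, hM0]
    push_cast
    congr 2
    · ring
    · ring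
  have hfin : ∀ x : ℝ, cfDer μ 0 x = cfDer ν 0 x := by
    intro x
    have hbd : ∀ k y, ‖cfDer μ k y - cfDer ν k y‖ ≤ M k := fun k y => by
      rw [hMadd]
      exact (norm_sub_le _ _).trans (add_le_add (cfDer_bound μ k y) (cfDer_bound ν k y))
    rcases le_total 0 x with hx | hx
    · have := bang (fun k y => cfDer μ k y - cfDer ν k y) M hpos hlog
        (fun k y => (cfDer_hasDerivAt μ hmomμ k y).sub (cfDer_hasDerivAt ν hmom k y)) hbd
        (fun k => by simp only [cfDer_zero, heq, sub_self]) hdiv x hx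
      exact sub_eq_zero.1 this
    · have := bang (fun k y => (-1) ^ k * (cfDer μ k (-y) - cfDer ν k (-y))) M hpos hlog
        (fun k y => by
          have h1 := ((cfDer_hasDerivAt μ hmomμ k (-y)).sub
            (cfDer_hasDerivAt ν hmom k (-y))).scomp y (hasDerivAt_neg y)
          have h2 := h1.const_mul ((-1 : ℂ) ^ k)
          refine h2.congr_deriv ?_
          simp [pow_succ]
          ring)
        (fun k y => by simpa using hbd k (-y))
        (fun k => by simp only [neg_zero, cfDer_zero, heq, sub_self, mul_zero]) hdiv (-x) (by linarith)
      simp only [pow_zero, one_mul, neg_neg] at this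
      exact sub_eq_zero.1 this
  apply Measure.ext_of_charFun
  ext x
  have := hfin x
  simp only [cfDer, pow_zero, one_mul] at this
  rw [charFun_apply_real, charFun_apply_real, this]
end

section
/- (Petersen's theorem) Let μ and ν be Borel probability measures on ℝ^d with identical mixed moments of all orders. If each one-dimensional coordinate marginal of μ is determined by its moments (e.g., satisfies Carleman's condition), then μ = ν. -/
open MeasureTheory Filter
open scoped InnerProductSpace ENNReal Topology BigOperators

open Polynomial in
lemma pt_sos : ∀ n : ℕ, ∀ R : ℝ[X], R.natDegree ≤ n → (∀ x, 0 ≤ R.eval x) →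
    ∃ A B : ℝ[X], R = A ^ 2 + B ^ 2 := by
  intro n
  induction n using Nat.strong_induction_on with
  | _ n ih =>
  intro R hn hR
  by_cases hdeg : R.natDegree = 0
  · obtain ⟨c, rfl⟩ := natDegree_eq_zero.mp hdeg
    have hc : 0 ≤ c := by simpa using hR 0
    refine ⟨C (Real.sqrt c), 0, ?_⟩
    rw [← C_pow, Real.sq_sqrt hc]; simp
  have hR0 : R ≠ 0 := by rintro rfl; simp at hdeg
  have hdegpos : 0 < R.natDegree := Nat.pos_of_ne_zero hdeg
  obtain ⟨z, hz⟩ : ∃ z : ℂ, aeval z R = 0 := by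
    apply IsAlgClosed.exists_aeval_eq_zero
    rw [degree_eq_natDegree hR0]
    exact_mod_cast hdeg
  by_cases him : z.im = 0
  · have _realroot := him
    set a := z.re with ha
    have hza : z = (algebraMap ℝ ℂ a) := by
      apply Complex.ext <;> simp [ha, him]
    have hroot : R.eval a = 0 := by
      rw [hza, aeval_algebraMap_apply] at hz
      simpa using hz
    obtain ⟨S, hS⟩ := dvd_iff_isRoot.mpr hroot
    have hval : ∀ x, R.eval x = (x - a) * S.eval x := by intro x; rw [hS]; simp
    have hSa : S.eval a = 0 := by
      have hc : ContinuousAt (fun x => S.eval x) a := S.continuous.continuousAt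
      apply le_antisymm
      · refine le_of_tendsto (hc.tendsto.mono_left (nhdsWithin_le_nhds (s := Set.Iio a))) ?_
        filter_upwards [self_mem_nhdsWithin] with x hx
        have := hR x
        rw [hval] at this
        have hx' : x - a < 0 := sub_neg.mpr hx
        by_contra! h
        nlinarith
      · refine ge_of_tendsto (hc.tendsto.mono_left (nhdsWithin_le_nhds (s := Set.Ioi a))) ?_
        filter_upwards [self_mem_nhdsWithin] with x hx
        have := hR x
        rw [hval] at this
        have hx' : 0 < x - a := sub_pos.mpr hx
        by_contra! h
        nlinarith
    obtain ⟨T, hT⟩ := dvd_iff_isRoot.mpr hSa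
    have hRT : R = (X - C a) ^ 2 * T := by rw [hS, hT]; ring
    have hT0 : T ≠ 0 := by rintro rfl; simp at hRT; exact hR0 hRT
    have hd : R.natDegree = 2 + T.natDegree := by
      rw [hRT, natDegree_mul (pow_ne_zero _ (X_sub_C_ne_zero a)) hT0]; simp
    have hTpos : ∀ x, 0 ≤ T.eval x := by
      have hne : ∀ x, x ≠ a → 0 ≤ T.eval x := by
        intro x hx
        have h := hR x
        rw [hRT] at h
        simp only [eval_mul, eval_pow, eval_sub, eval_X, eval_C] at h
        exact nonneg_of_mul_nonneg_right h (by have := sub_ne_zero.mpr hx; positivity)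
      intro x
      by_cases hx : x = a
      · rw [hx]
        refine ge_of_tendsto ((T.continuous.continuousAt).tendsto.mono_left
          (nhdsWithin_le_nhds (s := Set.Ioi a))) ?_
        filter_upwards [self_mem_nhdsWithin] with y hy
        exact hne y (ne_of_gt hy)
      · exact hne x hx
    obtain ⟨A, B, hAB⟩ := ih T.natDegree (by omega) T le_rfl hTpos
    exact ⟨(X - C a) * A, (X - C a) * B, by rw [hRT, hAB]; ring⟩
  · obtain ⟨T, hT⟩ := R.quadratic_dvd_of_aeval_eq_zero_im_ne_zero hz him
    have hq : (X ^ 2 - C (2 * z.re) * X + C (‖z‖ ^ 2) : ℝ[X]) = (X - C z.re) ^ 2 + (C z.im) ^ 2 := by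
      rw [← Complex.normSq_eq_norm_sq, Complex.normSq_apply]
      simp only [map_add, map_mul, map_ofNat]
      ring
    rw [hq] at hT
    have hT0 : T ≠ 0 := by rintro rfl; simp at hT; exact hR0 hT
    have hd : R.natDegree = 2 + T.natDegree := by
      have h2 : ((X - C z.re) ^ 2 + (C z.im) ^ 2 : ℝ[X]).natDegree = 2 := by
        rw [← hq]
        compute_degree!
      rw [hT, natDegree_mul _ hT0, h2]
      intro h0; rw [h0] at h2; simp at h2
    have hTpos : ∀ x, 0 ≤ T.eval x := by
      intro x
      have h := hR x
      rw [hT] at h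
      simp only [eval_mul, eval_pow, eval_sub, eval_X, eval_C, eval_add] at h
      exact nonneg_of_mul_nonneg_right h (by positivity)
    obtain ⟨A, B, hAB⟩ := ih T.natDegree (by omega) T le_rfl hTpos
    exact ⟨(X - C z.re) * A - C z.im * B, (X - C z.re) * B + C z.im * A, by rw [hT, hAB]; ring⟩

/-- Continuous functions of polynomial growth. -/
def PtPG : Submodule ℝ C(ℝ, ℝ) where
  carrier := {g | ∃ q : Polynomial ℝ, ∀ x, |g x| ≤ q.eval x}
  zero_mem' := ⟨0, by simp⟩
  add_mem' := by
    rintro f g ⟨p, hp⟩ ⟨q, hq⟩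
    refine ⟨p + q, fun x => ?_⟩
    rw [Polynomial.eval_add]
    exact (abs_add_le _ _).trans (add_le_add (hp x) (hq x))
  smul_mem' := by
    rintro c f ⟨p, hp⟩
    refine ⟨Polynomial.C |c| * p, fun x => ?_⟩
    simp only [ContinuousMap.coe_smul, Pi.smul_apply, smul_eq_mul, abs_mul, Polynomial.eval_mul,
      Polynomial.eval_C]
    exact mul_le_mul_of_nonneg_left (hp x) (abs_nonneg c)

lemma pt_mem_of_bound (g : C(ℝ, ℝ)) (q : Polynomial ℝ) (h : ∀ x, |g x| ≤ q.eval x) : g ∈ PtPG :=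
  ⟨q, h⟩

lemma pt_poly_le (p : Polynomial ℝ) (x : ℝ) : |p.eval x| ≤ (p ^ 2 + 1).eval x := by
  simp only [Polynomial.eval_add, Polynomial.eval_pow, Polynomial.eval_one]
  rw [abs_le]; constructor <;> nlinarith [sq_nonneg (p.eval x - 1), sq_nonneg (p.eval x + 1)]

noncomputable def ptPoly (p : Polynomial ℝ) : PtPG :=
  ⟨p.toContinuousMap, p ^ 2 + 1, fun x => by simpa using pt_poly_le p x⟩

lemma pt_cc_mem (f : CompactlySupportedContinuousMap ℝ ℝ) : f.toContinuousMap ∈ PtPG := by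
  obtain ⟨C, hC⟩ := f.hasCompactSupport.exists_bound_of_continuous f.continuous
  exact ⟨Polynomial.C C, fun x => by simpa using hC x⟩

open CompactlySupported in
lemma pt_repr (L : PtPG →ₗ[ℝ] ℝ) (hL : ∀ g : PtPG, (∀ x, 0 ≤ g.1 x) → 0 ≤ L g) :
    ∃ m : Measure ℝ, ∀ g : PtPG, Integrable (fun x => g.1 x) m ∧ ∫ x, g.1 x ∂m = L g := by
  have hmono : ∀ f g : PtPG, (∀ x, f.1 x ≤ g.1 x) → L f ≤ L g := by
    intro f g h
    have := hL (g - f) (fun x => by simpa using h x)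
    rw [map_sub] at this; linarith
  let ι : C_c(ℝ, ℝ) →ₗ[ℝ] PtPG :=
    { toFun := fun f => ⟨f.toContinuousMap, pt_cc_mem f⟩
      map_add' := fun f g => rfl
      map_smul' := fun c f => rfl }
  let Λ : C_c(ℝ, ℝ) →ₚ[ℝ] ℝ := PositiveLinearMap.mk₀ (L ∘ₗ ι) (fun f hf => hL _ (fun x => hf x))
  let m := RealRMK.rieszMeasure Λ
  have hm : ∀ f : C_c(ℝ, ℝ), ∫ x, f x ∂m = L (ι f) := fun f => RealRMK.integral_rieszMeasure Λ f
  have hfin : IsFiniteMeasureOnCompacts m := by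
    have : m.Regular := RealRMK.regular_rieszMeasure Λ
    infer_instance
  -- cutoffs
  have hχ : ∀ n : ℕ, ∃ f : C(ℝ, ℝ), Set.EqOn f 1 (Set.Icc (-(n : ℝ)) n) ∧ HasCompactSupport f ∧
      ∀ x, f x ∈ Set.Icc (0 : ℝ) 1 := by
    intro n
    obtain ⟨f, h1, -, h3, h4⟩ := exists_continuous_one_zero_of_isCompact
      (isCompact_Icc (a := -(n : ℝ)) (b := n)) isClosed_empty (Set.disjoint_empty _)
    exact ⟨f, h1, h3, h4⟩
  choose χ hχ1 hχ2 hχ3 using hχ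
  let cut : ℕ → PtPG → C_c(ℝ, ℝ) := fun n g => ⟨χ n * g.1, (hχ2 n).mul_right⟩
  have hcut : ∀ n g x, cut n g x = χ n x * g.1 x := fun n g x => rfl
  have hcut' : ∀ n g x, (ι (cut n g)).1 x = χ n x * g.1 x := fun n g x => rfl
  have hintnn : ∀ g : PtPG, (∀ x, 0 ≤ g.1 x) → Integrable (fun x => g.1 x) m := by
    intro g hg
    have hcov : AECover m atTop (fun n : ℕ => Set.Icc (-(n : ℝ)) n) :=
      aecover_Icc (tendsto_neg_atTop_atBot.comp tendsto_natCast_atTop_atTop)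
        tendsto_natCast_atTop_atTop
    refine hcov.integrable_of_integral_bounded_of_nonneg_ae (L g)
      (fun n => g.1.continuous.continuousOn.integrableOn_compact isCompact_Icc)
      (Eventually.of_forall hg) (Eventually.of_forall fun n => ?_)
    have hi : Integrable (fun x => cut n g x) m :=
      (cut n g).continuous.integrable_of_hasCompactSupport (cut n g).hasCompactSupport
    calc ∫ x in Set.Icc (-(n : ℝ)) n, g.1 x ∂m = ∫ x in Set.Icc (-(n : ℝ)) n, cut n g x ∂m := by
          refine setIntegral_congr_fun measurableSet_Icc (fun x hx => ?_)
          simp only [hcut, hχ1 n hx]; simp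
      _ ≤ ∫ x, cut n g x ∂m := setIntegral_le_integral hi
          (Eventually.of_forall fun x => mul_nonneg (hχ3 n x).1 (hg x))
      _ = L (ι (cut n g)) := hm _
      _ ≤ L g := hmono _ _ (fun x => by
          rw [hcut']; exact mul_le_of_le_one_left (hg x) (hχ3 n x).2)
  have hgint : ∀ g : PtPG, Integrable (fun x => g.1 x) m := by
    intro g
    obtain ⟨q, hq⟩ := g.2
    have := hintnn ⟨|g.1|, q, fun x => by simpa using hq x⟩ (fun x => by simp)
    refine this.mono' g.1.continuous.aestronglyMeasurable (Eventually.of_forall fun x => ?_)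
    simp
  refine ⟨m, fun g => ⟨hgint g, ?_⟩⟩
  have h1 : Tendsto (fun n : ℕ => ∫ x, cut n g x ∂m) atTop (𝓝 (∫ x, g.1 x ∂m)) := by
    refine tendsto_integral_of_dominated_convergence (fun x => |g.1 x|)
      (fun n => (cut n g).continuous.aestronglyMeasurable) (hgint g).abs
      (fun n => Eventually.of_forall fun x => ?_) (Eventually.of_forall fun x => ?_)
    · rw [hcut, Real.norm_eq_abs, abs_mul, abs_of_nonneg (hχ3 n x).1]
      exact mul_le_of_le_one_left (abs_nonneg _) (hχ3 n x).2
    · apply tendsto_const_nhds.congr'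
      obtain ⟨N, hN⟩ := exists_nat_ge |x|
      filter_upwards [eventually_ge_atTop N] with n hn
      have : x ∈ Set.Icc (-(n : ℝ)) n := abs_le.mp (hN.trans (by exact_mod_cast hn))
      rw [hcut, hχ1 n this]; simp
  have h2 : Tendsto (fun n : ℕ => ∫ x, cut n g x ∂m) atTop (𝓝 (L g)) := by
    obtain ⟨q, hq⟩ := g.2
    let r := ptPoly (q * Polynomial.X ^ 2)
    have hr : ∀ x, r.1 x = q.eval x * x ^ 2 := fun x => by simp [r, ptPoly]
    have key : ∀ n : ℕ, 0 < n → ∀ x, |g.1 x| * (1 - χ n x) ≤ ((1 / (n : ℝ) ^ 2) • r).1 x := by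
      intro n hn x
      have hn' : (0 : ℝ) < n := by exact_mod_cast hn
      have hq0 : 0 ≤ q.eval x := (abs_nonneg _).trans (hq x)
      have : ((1 / (n : ℝ) ^ 2) • r).1 x = (1 / (n : ℝ) ^ 2) * (q.eval x * x ^ 2) := by
        rw [← hr]; rfl
      rw [this]
      by_cases hx : x ∈ Set.Icc (-(n : ℝ)) n
      · rw [hχ1 n hx]; simp; positivity
      · have hx2 : (n : ℝ) ≤ |x| := by
          by_contra! h
          exact hx (abs_le.mp h.le)
        have hx3 : (n : ℝ) ^ 2 ≤ x ^ 2 := by rw [← sq_abs x]; gcongr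
        have h4 : 1 ≤ x ^ 2 / (n : ℝ) ^ 2 := by rw [le_div_iff₀ (by positivity)]; linarith
        calc |g.1 x| * (1 - χ n x) ≤ q.eval x * 1 := by
              apply mul_le_mul (hq x) (by linarith [(hχ3 n x).1]) (by linarith [(hχ3 n x).2]) hq0
          _ ≤ q.eval x * (x ^ 2 / (n : ℝ) ^ 2) := by gcongr
          _ = _ := by ring
    have hb : ∀ n : ℕ, 0 < n → |L (ι (cut n g)) - L g| ≤ 1 / (n : ℝ) ^ 2 * L r := by
      intro n hn
      rw [← map_sub, ← smul_eq_mul, ← map_smul, abs_le, ← map_neg]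
      have e : ∀ x, (ι (cut n g) - g).1 x = - (g.1 x * (1 - χ n x)) := by
        intro x
        have : (ι (cut n g) - g).1 x = χ n x * g.1 x - g.1 x := rfl
        rw [this]; ring
      constructor
      · apply hmono
        intro x
        have := key n hn x
        rw [e]
        have h5 : (-((1 / (n : ℝ) ^ 2) • r)).1 x = - ((1 / (n : ℝ) ^ 2) • r).1 x := rfl
        rw [h5]
        have := mul_le_mul_of_nonneg_right (le_abs_self (g.1 x)) (sub_nonneg.mpr (hχ3 n x).2)
        linarith
      · apply hmono
        intro x
        have := key n hn x
        rw [e]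
        have := mul_le_mul_of_nonneg_right (neg_abs_le (g.1 x)) (sub_nonneg.mpr (hχ3 n x).2)
        linarith
    simp_rw [hm]
    rw [tendsto_iff_dist_tendsto_zero]
    have h0 : Tendsto (fun n : ℕ => 1 / (n : ℝ) ^ 2 * L r) atTop (𝓝 0) := by
      have : Tendsto (fun n : ℕ => 1 / (n : ℝ) ^ 2) atTop (𝓝 0) :=
        tendsto_const_nhds.div_atTop
          ((tendsto_pow_atTop two_ne_zero).comp tendsto_natCast_atTop_atTop)
      simpa using this.mul_const (L r)
    refine squeeze_zero' (Eventually.of_forall fun n => dist_nonneg) ?_ h0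
    filter_upwards [eventually_gt_atTop 0] with n hn
    exact hb n hn
  exact tendsto_nhds_unique h1 h2

lemma pt_poly_int (ρ : Measure ℝ) (h : ∀ m : ℕ, Integrable (fun t : ℝ => |t| ^ m) ρ)
    (p : Polynomial ℝ) : Integrable (fun x => p.eval x) ρ := by
  simp_rw [Polynomial.eval_eq_sum_range]
  refine integrable_finsetSum _ (fun i _ => Integrable.const_mul ?_ _)
  refine (h i).mono' (by fun_prop) (Eventually.of_forall fun x => ?_)
  simp

noncomputable def ptU : C(ℝ, ℝ) := ⟨fun x => 1 / (1 + x ^ 2), by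
  refine Continuous.div (by fun_prop) (by fun_prop) (fun x => by positivity)⟩

lemma ptU_apply (x : ℝ) : ptU x = 1 / (1 + x ^ 2) := rfl

lemma ptU_abs (x : ℝ) : |ptU x| ≤ 1 := by
  rw [ptU_apply, abs_of_nonneg (by positivity), div_le_one (by positivity)]
  nlinarith [sq_nonneg x]

lemma pt_lower (ρ : Measure ℝ) [IsProbabilityMeasure ρ]
    (h : ∀ m : ℕ, Integrable (fun t : ℝ => |t| ^ m) ρ)
    (hdet : ∀ ρ' : Measure ℝ, IsProbabilityMeasure ρ' →
      (∀ m : ℕ, Integrable (fun t => |t| ^ m) ρ') →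
      (∀ m : ℕ, (∫ t, t ^ m ∂ρ') = ∫ t, t ^ m ∂ρ) → ρ' = ρ) (ε : ℝ) (hε : 0 < ε) :
    ∃ p : Polynomial ℝ, (∀ x, p.eval x ≤ ptU x) ∧ ∫ x, (ptU x - p.eval x) ∂ρ < ε := by
  have hpi := pt_poly_int ρ h
  have hgi : ∀ g : PtPG, Integrable (fun x => g.1 x) ρ := by
    intro g
    obtain ⟨q, hq⟩ := g.2
    exact (hpi q).mono' g.1.continuous.aestronglyMeasurable (Eventually.of_forall fun x => hq x)
  let S : PtPG → Set ℝ := fun g => {c | ∃ p : Polynomial ℝ, (∀ x, g.1 x ≤ p.eval x) ∧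
    c = ∫ x, p.eval x ∂ρ}
  have hSne : ∀ g, (S g).Nonempty := by
    intro g
    obtain ⟨q, hq⟩ := g.2
    exact ⟨_, q, fun x => (le_abs_self _).trans (hq x), rfl⟩
  have hSbd : ∀ g, BddBelow (S g) := by
    intro g
    refine ⟨∫ x, g.1 x ∂ρ, ?_⟩
    rintro c ⟨p, hp, rfl⟩
    exact integral_mono (hgi g) (hpi p) hp
  let N : PtPG → ℝ := fun g => sInf (S g)
  have hNle : ∀ g (p : Polynomial ℝ), (∀ x, g.1 x ≤ p.eval x) → N g ≤ ∫ x, p.eval x ∂ρ :=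
    fun g p hp => csInf_le (hSbd g) ⟨p, hp, rfl⟩
  have hNlt : ∀ g c, N g < c → ∃ p : Polynomial ℝ, (∀ x, g.1 x ≤ p.eval x) ∧
      ∫ x, p.eval x ∂ρ < c := by
    intro g c hc
    obtain ⟨_, ⟨p, hp, rfl⟩, h2⟩ := exists_lt_of_csInf_lt (hSne g) hc
    exact ⟨p, hp, h2⟩
  have N_add : ∀ f g, N (f + g) ≤ N f + N g := by
    intro f g
    refine le_of_forall_pos_le_add (fun δ hδ => ?_)
    obtain ⟨p, hp, hp2⟩ := hNlt f (N f + δ / 2) (by linarith)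
    obtain ⟨q, hq, hq2⟩ := hNlt g (N g + δ / 2) (by linarith)
    have := hNle (f + g) (p + q) (fun x => by
      rw [Polynomial.eval_add]; exact add_le_add (hp x) (hq x))
    simp only [Polynomial.eval_add] at this
    rw [integral_add (hpi p) (hpi q)] at this
    linarith
  have N_le : ∀ c : ℝ, 0 < c → ∀ f, N (c • f) ≤ c * N f := by
    intro c hc f
    refine le_of_forall_pos_le_add (fun δ hδ => ?_)
    obtain ⟨p, hp, hp2⟩ := hNlt f (N f + δ / c) (by have := div_pos hδ hc; linarith)
    have := hNle (c • f) (Polynomial.C c * p) (fun x => by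
      rw [Polynomial.eval_mul, Polynomial.eval_C]
      exact mul_le_mul_of_nonneg_left (hp x) hc.le)
    simp only [Polynomial.eval_mul, Polynomial.eval_C] at this
    rw [integral_const_mul] at this
    have h3 := mul_lt_mul_of_pos_left hp2 hc
    have h4 : c * (N f + δ / c) = c * N f + δ := by field_simp
    linarith
  have N_hom : ∀ c : ℝ, 0 < c → ∀ f, N (c • f) = c * N f := by
    intro c hc f
    apply le_antisymm (N_le c hc f)
    have := N_le c⁻¹ (inv_pos.mpr hc) (c • f)
    rw [smul_smul, inv_mul_cancel₀ hc.ne', one_smul] at this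
    calc c * N f ≤ c * (c⁻¹ * N (c • f)) := by gcongr
      _ = N (c • f) := by field_simp
  have N_0 : N 0 = 0 := by
    have := N_hom 2 (by norm_num) 0
    rw [smul_zero] at this; linarith
  let u : PtPG := ⟨-ptU, 1, fun x => by simpa using ptU_abs x⟩
  have hu : u ≠ 0 := by
    intro h0
    have : u.1 0 = 0 := by rw [h0]; rfl
    simp [u, ptU_apply] at this
  obtain ⟨L, hL1, hL2⟩ := exists_extension_of_le_sublinear
    (LinearPMap.mkSpanSingleton u (N u) hu) N N_hom N_add (by
      rintro ⟨y, hy⟩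
      obtain ⟨c, rfl⟩ := Submodule.mem_span_singleton.mp hy
      have hval : (LinearPMap.mkSpanSingleton u (N u) hu) ⟨c • u, hy⟩ = c • N u :=
        LinearPMap.mkSpanSingleton'_apply _ _ _ _ _
      rw [hval]
      change c * N u ≤ N (c • u)
      rcases lt_trichotomy c 0 with hc | hc | hc
      · have h1 := N_hom (-c) (by linarith) (u)
        have h2 := N_add (c • u) ((-c) • u)
        rw [← add_smul, add_neg_cancel, zero_smul, N_0] at h2
        linarith
      · subst hc; rw [zero_smul, N_0]; simp
      · rw [N_hom c hc])
  have hLu : L u = N u := by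
    have := hL1 ⟨u, Submodule.mem_span_singleton_self u⟩
    rw [this]
    exact LinearPMap.mkSpanSingleton'_apply_self _ _ _ _
  have hLpos : ∀ g : PtPG, (∀ x, 0 ≤ g.1 x) → 0 ≤ L g := by
    intro g hg
    have h1 := hL2 (-g)
    have h2 := hNle (-g) 0 (fun x => by simpa using hg x)
    simp at h2
    rw [map_neg] at h1
    linarith
  have hLp : ∀ p, L (ptPoly p) = ∫ x, p.eval x ∂ρ := by
    have hle : ∀ p, L (ptPoly p) ≤ ∫ x, p.eval x ∂ρ := fun p =>
      (hL2 _).trans (hNle _ p (fun x => by simp [ptPoly]))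
    intro p
    apply le_antisymm (hle p)
    have h1 := hle (-p)
    have h2 : ptPoly (-p) = - ptPoly p := by
      apply Subtype.ext; ext x; simp [ptPoly]
    rw [h2, map_neg] at h1
    simp only [Polynomial.eval_neg, integral_neg] at h1
    linarith
  obtain ⟨m, hm⟩ := pt_repr L hLpos
  have hmp : ∀ p : Polynomial ℝ, Integrable (fun x => p.eval x) m ∧
      ∫ x, p.eval x ∂m = ∫ x, p.eval x ∂ρ := by
    intro p
    have h1 := hm (ptPoly p)
    rw [hLp] at h1
    simpa [ptPoly] using h1
  have hfin : IsFiniteMeasure m := by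
    have h1 := (hmp 1).1
    simp only [Polynomial.eval_one] at h1
    exact (integrable_const_iff_isFiniteMeasure one_ne_zero).mp h1
  have hprob : IsProbabilityMeasure m := by
    have h1 := (hmp 1).2
    simp only [Polynomial.eval_one, integral_const, smul_eq_mul, mul_one, probReal_univ] at h1
    constructor
    rw [← ENNReal.toReal_eq_one_iff]; exact h1
  have hmρ : m = ρ := by
    apply hdet m hprob
    · intro k
      have := (hmp (Polynomial.X ^ k)).1.abs
      simpa [abs_pow] using this
    · intro k
      simpa using (hmp (Polynomial.X ^ k)).2
  have hNu : N u = ∫ x, u.1 x ∂ρ := by rw [← hLu, ← (hm u).2, hmρ]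
  obtain ⟨q, hq1, hq2⟩ := hNlt u (N u + ε) (by linarith)
  refine ⟨-q, fun x => ?_, ?_⟩
  · have := hq1 x
    simp only [u, ContinuousMap.coe_neg, Pi.neg_apply] at this
    rw [Polynomial.eval_neg]; linarith
  · have h1 : ∀ x, ptU x - (-q).eval x = q.eval x - u.1 x := by
      intro x; simp [u]; ring
    simp_rw [h1]
    rw [integral_sub (hpi q) (hgi u)]
    linarith

noncomputable def ptV : C(ℝ, ℝ) := ⟨fun x => x / (1 + x ^ 2), by
  refine Continuous.div (by fun_prop) (by fun_prop) (fun x => by positivity)⟩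

lemma ptV_apply (x : ℝ) : ptV x = x / (1 + x ^ 2) := rfl

lemma ptV_abs (x : ℝ) : |ptV x| ≤ 1 := by
  rw [ptV_apply, abs_div, abs_of_nonneg (by positivity : 0 ≤ 1 + x ^ 2), div_le_one (by positivity),
    ← sq_abs]
  nlinarith [sq_nonneg (|x| - 1), abs_nonneg x]

open Polynomial in
lemma pt_div (A : ℝ[X]) : ∃ (Q : ℝ[X]) (a b : ℝ), A = (1 + X ^ 2) * Q + C a + C b * X := by
  have hm : (1 + X ^ 2 : ℝ[X]).Monic := by monicity!
  have hd : (1 + X ^ 2 : ℝ[X]).natDegree = 2 := by compute_degree!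
  have h1 : (A %ₘ (1 + X ^ 2)).natDegree ≤ 1 := by
    have := natDegree_modByMonic_lt A hm (by intro h; rw [h] at hd; simp at hd)
    omega
  obtain ⟨b, a, hab⟩ := exists_eq_X_add_C_of_natDegree_le_one h1
  refine ⟨A /ₘ (1 + X ^ 2), a, b, ?_⟩
  have := modByMonic_add_div A (1 + X ^ 2)
  rw [hab] at this
  linear_combination -this

lemma pt_cs (a b c e p q r s : ℝ) : (a * p + b * q + c * r + e * s) ^ 2 ≤
    (a ^ 2 + b ^ 2 + c ^ 2 + e ^ 2) * (p ^ 2 + q ^ 2 + r ^ 2 + s ^ 2) := by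
  nlinarith [sq_nonneg (a * q - b * p), sq_nonneg (a * r - c * p), sq_nonneg (a * s - e * p),
    sq_nonneg (b * r - c * q), sq_nonneg (b * s - e * q), sq_nonneg (c * s - e * r)]

open Polynomial in
lemma pt_alg (p : ℝ[X]) (hp : ∀ x, p.eval x ≤ ptU x) : ∃ P Q : ℝ[X],
    (∀ x, (ptU x - P.eval x) ^ 2 ≤ ptU x - p.eval x) ∧
    (∀ x, (ptV x - Q.eval x) ^ 2 ≤ ptU x - p.eval x) := by
  obtain ⟨A, B, hAB⟩ := pt_sos _ (1 - (1 + X ^ 2) * p) le_rfl (fun x => by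
    have := hp x
    rw [ptU_apply, le_div_iff₀ (by positivity)] at this
    simp; linarith)
  obtain ⟨A1, a0, a1, hA⟩ := pt_div A
  obtain ⟨B1, b0, b1, hB⟩ := pt_div B
  have hre : a0 ^ 2 - a1 ^ 2 + (b0 ^ 2 - b1 ^ 2) = 1 := by
    have h := congrArg (fun q => (aeval Complex.I q).re) hAB
    rw [hA, hB] at h
    simp [pow_two] at h
    linarith
  set M := a0 ^ 2 + a1 ^ 2 + b0 ^ 2 + b1 ^ 2 with hM
  have hM1 : 1 ≤ M := by nlinarith [sq_nonneg a1, sq_nonneg b1]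
  have hM0 : M ≠ 0 := by positivity
  have hRx : ∀ x : ℝ, 1 - (1 + x ^ 2) * p.eval x = A.eval x ^ 2 + B.eval x ^ 2 := by
    intro x
    have := congrArg (fun q => q.eval x) hAB
    simpa using this
  have hAx : ∀ x : ℝ, A.eval x = (1 + x ^ 2) * A1.eval x + a0 + a1 * x := by
    intro x
    have := congrArg (fun q => q.eval x) hA
    simpa using this
  have hBx : ∀ x : ℝ, B.eval x = (1 + x ^ 2) * B1.eval x + b0 + b1 * x := by
    intro x
    have := congrArg (fun q => q.eval x) hB
    simpa using this
  have hfin : ∀ x N : ℝ, N ^ 2 ≤ M * ((A.eval x * ptU x) ^ 2 + (A.eval x * ptV x) ^ 2 +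
      (B.eval x * ptU x) ^ 2 + (B.eval x * ptV x) ^ 2) → (N / M) ^ 2 ≤ ptU x - p.eval x := by
    intro x N h
    have hx : (1 + x ^ 2 : ℝ) ≠ 0 := by positivity
    have e : (A.eval x * ptU x) ^ 2 + (A.eval x * ptV x) ^ 2 +
      (B.eval x * ptU x) ^ 2 + (B.eval x * ptV x) ^ 2 = ptU x - p.eval x := by
      have e1 : ptU x - p.eval x = (1 - (1 + x ^ 2) * p.eval x) * ptU x := by
        rw [ptU_apply]; field_simp
      rw [e1, hRx, ptU_apply, ptV_apply]
      field_simp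
      ring
    rw [e] at h
    have h0 : 0 ≤ ptU x - p.eval x := by linarith [hp x]
    rw [div_pow, div_le_iff₀ (by positivity)]
    nlinarith [mul_nonneg h0 (mul_nonneg (by linarith : 0 ≤ M) (by linarith : 0 ≤ M - 1))]
  refine ⟨C (-M⁻¹) * (C a0 * A1 - C a1 * (X * A1 + C a1) + (C b0 * B1 - C b1 * (X * B1 + C b1))),
    C (-M⁻¹) * (C a1 * A1 + C a0 * (X * A1 + C a1) + (C b1 * B1 + C b0 * (X * B1 + C b1))),
    fun x => ?_, fun x => ?_⟩
  · have hx : (1 + x ^ 2 : ℝ) ≠ 0 := by positivity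
    have h := hfin x (a0 * (A.eval x * ptU x) + (-a1) * (A.eval x * ptV x) +
      b0 * (B.eval x * ptU x) + (-b1) * (B.eval x * ptV x)) (by
        refine (pt_cs _ _ _ _ _ _ _ _).trans (le_of_eq ?_)
        rw [hM]; ring)
    refine le_trans (le_of_eq ?_) h
    congr 1
    simp only [eval_mul, eval_add, eval_sub, eval_C, eval_X]
    rw [eq_div_iff hM0, hAx, hBx, ptU_apply, ptV_apply]
    field_simp
    rw [hM]; ring
  · have hx : (1 + x ^ 2 : ℝ) ≠ 0 := by positivity
    have h := hfin x (a1 * (A.eval x * ptU x) + a0 * (A.eval x * ptV x) +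
      b1 * (B.eval x * ptU x) + b0 * (B.eval x * ptV x)) (by
        refine (pt_cs _ _ _ _ _ _ _ _).trans (le_of_eq ?_)
        rw [hM]; ring)
    refine le_trans (le_of_eq ?_) h
    congr 1
    simp only [eval_mul, eval_add, eval_C, eval_X]
    rw [eq_div_iff hM0, hAx, hBx, ptU_apply, ptV_apply]
    field_simp
    rw [hM]; ring

lemma pt_L2 (ρ : Measure ℝ) [IsProbabilityMeasure ρ]
    (h : ∀ m : ℕ, Integrable (fun t : ℝ => |t| ^ m) ρ)
    (hdet : ∀ ρ' : Measure ℝ, IsProbabilityMeasure ρ' →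
      (∀ m : ℕ, Integrable (fun t => |t| ^ m) ρ') →
      (∀ m : ℕ, (∫ t, t ^ m ∂ρ') = ∫ t, t ^ m ∂ρ) → ρ' = ρ) (ε : ℝ) (hε : 0 < ε) :
    (∃ p : Polynomial ℝ, ∫ x, (ptU x - p.eval x) ^ 2 ∂ρ < ε) ∧
    (∃ p : Polynomial ℝ, ∫ x, (ptV x - p.eval x) ^ 2 ∂ρ < ε) := by
  obtain ⟨p, hp, hlt⟩ := pt_lower ρ h hdet ε hε
  obtain ⟨P, Q, hP, hQ⟩ := pt_alg p hp
  have hi : Integrable (fun x => ptU x - p.eval x) ρ := by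
    refine Integrable.sub ?_ (pt_poly_int ρ h p)
    exact (integrable_const (1 : ℝ)).mono' ptU.continuous.aestronglyMeasurable
      (Eventually.of_forall fun x => ptU_abs x)
  exact ⟨⟨P, (integral_mono_of_nonneg (Eventually.of_forall fun x => sq_nonneg _) hi
    (Eventually.of_forall hP)).trans_lt hlt⟩, ⟨Q, (integral_mono_of_nonneg
    (Eventually.of_forall fun x => sq_nonneg _) hi (Eventually.of_forall hQ)).trans_lt hlt⟩⟩

open BoundedContinuousFunction in
theorem stmt10 (d : ℕ) (μ ν : Measure (EuclideanSpace ℝ (Fin d)))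
    [IsProbabilityMeasure μ] [IsProbabilityMeasure ν]
    (hμ : ∀ α : Fin d → ℕ, Integrable (fun x => ∏ i, |x i| ^ α i) μ)
    (hν : ∀ α : Fin d → ℕ, Integrable (fun x => ∏ i, |x i| ^ α i) ν)
    (hmom : ∀ α : Fin d → ℕ,
      (∫ x, ∏ i, x i ^ α i ∂μ) = ∫ x, ∏ i, x i ^ α i ∂ν)
    (hdet : ∀ j : Fin d, ∀ ρ : Measure ℝ, IsProbabilityMeasure ρ →
      (∀ m : ℕ, Integrable (fun t => |t| ^ m) ρ) →
      (∀ m : ℕ, (∫ t, t ^ m ∂ρ) = ∫ t, t ^ m ∂(μ.map (fun x => x j))) →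
      ρ = μ.map (fun x => x j)) :
    μ = ν := by
  let ev : MvPolynomial (Fin d) ℝ → EuclideanSpace ℝ (Fin d) → ℝ := fun P x => MvPolynomial.eval (fun i => x i) P
  have hmono : ∀ lam : Measure (EuclideanSpace ℝ (Fin d)), (∀ α : Fin d → ℕ, Integrable (fun x => ∏ i, |x i| ^ α i) lam) →
      ∀ α : Fin d → ℕ, Integrable (fun x : EuclideanSpace ℝ (Fin d) => ∏ i, x i ^ α i) lam := by
    intro lam hlam α
    refine (hlam α).mono' (by fun_prop) (Eventually.of_forall fun x => ?_)
    rw [Real.norm_eq_abs, Finset.abs_prod]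
    simp [abs_pow]
  have hevI : ∀ lam : Measure (EuclideanSpace ℝ (Fin d)), (∀ α : Fin d → ℕ, Integrable (fun x => ∏ i, |x i| ^ α i) lam) →
      ∀ P, Integrable (ev P) lam := by
    intro lam hlam P
    simp only [ev, MvPolynomial.eval_eq']
    exact integrable_finsetSum _ (fun α _ => (hmono lam hlam α).const_mul _)
  have hIμ := hevI μ hμ
  have hIν := hevI ν hν
  have hevc : ∀ P, Continuous (ev P) := by
    intro P
    simp only [ev, MvPolynomial.eval_eq']
    fun_prop
  have hev : ∀ P, ∫ x, ev P x ∂μ = ∫ x, ev P x ∂ν := by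
    intro P
    simp only [ev, MvPolynomial.eval_eq']
    rw [integral_finsetSum, integral_finsetSum]
    · refine Finset.sum_congr rfl (fun α _ => ?_)
      rw [integral_const_mul, integral_const_mul, hmom]
    · exact fun α _ => (hmono ν hν α).const_mul _
    · exact fun α _ => (hmono μ hμ α).const_mul _
  have hcoord : ∀ j, Measurable (fun x : EuclideanSpace ℝ (Fin d) => x j) := fun j => by fun_prop
  have hmapI : ∀ lam : Measure (EuclideanSpace ℝ (Fin d)), (∀ P, Integrable (ev P) lam) → ∀ j (m : ℕ),
      Integrable (fun t : ℝ => |t| ^ m) (lam.map (fun x => x j)) := by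
    intro lam hlam j m
    rw [integrable_map_measure (by fun_prop) (hcoord j).aemeasurable]
    have := (hlam (MvPolynomial.X j ^ m)).abs
    simpa [ev, abs_pow, Function.comp_def] using this
  have hprobμ : ∀ j, IsProbabilityMeasure (μ.map (fun x => x j)) :=
    fun j => Measure.isProbabilityMeasure_map (hcoord j).aemeasurable
  have hprobν : ∀ j, IsProbabilityMeasure (ν.map (fun x => x j)) :=
    fun j => Measure.isProbabilityMeasure_map (hcoord j).aemeasurable
  have hmarg : ∀ j, ν.map (fun x => x j) = μ.map (fun x => x j) := by
    intro j
    refine hdet j _ (hprobν j) (hmapI ν hIν j) (fun m => ?_)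
    rw [integral_map (hcoord j).aemeasurable (by fun_prop),
      integral_map (hcoord j).aemeasurable (by fun_prop)]
    have := hev (MvPolynomial.X j ^ m)
    simpa [ev] using this.symm
  -- products of a bounded function and a polynomial are integrable
  have hGP : ∀ lam : Measure (EuclideanSpace ℝ (Fin d)), (∀ P, Integrable (ev P) lam) → ∀ (G : EuclideanSpace ℝ (Fin d) →ᵇ ℝ) P,
      Integrable (fun x => G x * ev P x) lam := by
    intro lam hlam G P
    refine (hlam P).bdd_mul (c := ‖G‖) G.continuous.aestronglyMeasurable
      (Eventually.of_forall fun x => G.norm_coe_le_norm x)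
  let S : (EuclideanSpace ℝ (Fin d) →ᵇ ℝ) → Prop := fun G => ∀ P, ∫ x, G x * ev P x ∂μ = ∫ x, G x * ev P x ∂ν
  -- the bounded function obtained from a coordinate
  let lift : ∀ w : C(ℝ, ℝ), (∀ x, |w x| ≤ 1) → Fin d → (EuclideanSpace ℝ (Fin d) →ᵇ ℝ) := fun w hw j =>
    BoundedContinuousFunction.ofNormedAddCommGroup (fun x : EuclideanSpace ℝ (Fin d) => w (x j)) (by fun_prop) 1
      (fun x => hw _)
  have hlift : ∀ w hw j x, lift w hw j x = w (x j) := fun w hw j x => rfl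
  have key : ∀ lam : Measure (EuclideanSpace ℝ (Fin d)), IsProbabilityMeasure lam → (∀ P, Integrable (ev P) lam) →
      ∀ (w : C(ℝ, ℝ)) (hw : ∀ x, |w x| ≤ 1) (j : Fin d) (p : Polynomial ℝ) (δ : ℝ), 0 < δ →
      ∫ t, (w t - p.eval t) ^ 2 ∂(lam.map (fun x => x j)) < δ ^ 2 →
      ∀ (G : EuclideanSpace ℝ (Fin d) →ᵇ ℝ) P, |∫ x, (lift w hw j * G) x * ev P x ∂lam -
        ∫ x, G x * ev (p.toMvPolynomial j * P) x ∂lam| ≤ δ * (‖G‖ * (1 + ∫ x, ev P x ^ 2 ∂lam)) := by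
    intro lam _ hlam w hw j p δ hδ hp G P
    have e1 : ∀ x, ev (p.toMvPolynomial j * P) x = p.eval (x j) * ev P x := by
      intro x; simp only [ev, map_mul, MvPolynomial.eval_toMvPolynomial]
    rw [← integral_sub (hGP lam hlam _ P) (hGP lam hlam G _)]
    have hP2 : Integrable (fun x => ev P x ^ 2) lam := by
      have := hlam (P ^ 2)
      simpa [ev] using this
    have hw2 : Integrable (fun x : EuclideanSpace ℝ (Fin d) => (w (x j) - p.eval (x j)) ^ 2) lam := by
      have h1 : Integrable (fun x : EuclideanSpace ℝ (Fin d) => 2 + 2 * (p.eval (x j)) ^ 2) lam := by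
        have := hlam ((p ^ 2).toMvPolynomial j)
        simp only [ev, MvPolynomial.eval_toMvPolynomial, Polynomial.eval_pow] at this
        exact (integrable_const _).add (this.const_mul _)
      refine h1.mono' (Continuous.aestronglyMeasurable (by fun_prop))
        (Eventually.of_forall fun x => ?_)
      rw [Real.norm_eq_abs, abs_of_nonneg (sq_nonneg _)]
      have := (sq_le_one_iff_abs_le_one _).mpr (hw (x j))
      nlinarith [sq_nonneg (w (x j) + p.eval (x j))]
    rw [integral_map (hcoord j).aemeasurable (Continuous.aestronglyMeasurable (by fun_prop))] at hp
    have hb : Integrable (fun x : EuclideanSpace ℝ (Fin d) => ‖G‖ * ((w (x j) - p.eval (x j)) ^ 2 / δ + δ * ev P x ^ 2))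
        lam := ((hw2.div_const δ).add (hP2.const_mul δ)).const_mul _
    have h2 := norm_integral_le_of_norm_le (f := fun x => (lift w hw j * G) x * ev P x -
        G x * ev (p.toMvPolynomial j * P) x) hb (Eventually.of_forall fun x => by
      have e2 : (lift w hw j * G) x * ev P x - G x * ev (p.toMvPolynomial j * P) x =
          G x * ((w (x j) - p.eval (x j)) * ev P x) := by
        rw [e1, BoundedContinuousFunction.mul_apply, hlift]; ring
      rw [e2, norm_mul]
      refine mul_le_mul (G.norm_coe_le_norm x) ?_ (norm_nonneg _) (norm_nonneg _)
      rw [Real.norm_eq_abs]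
      generalize w (x j) - p.eval (x j) = a
      generalize ev P x = b
      have e3 : a ^ 2 / δ + δ * b ^ 2 = (a ^ 2 + (δ * b) ^ 2) / δ := by field_simp
      rw [e3, le_div_iff₀ hδ, ← abs_of_pos hδ, ← abs_mul, abs_of_pos hδ, abs_le]
      constructor <;> nlinarith [sq_nonneg (a - δ * b), sq_nonneg (a + δ * b), sq_nonneg a,
        sq_nonneg (δ * b)])
    rw [integral_const_mul, integral_add (hw2.div_const δ) (hP2.const_mul δ), integral_div,
      integral_const_mul] at h2
    rw [Real.norm_eq_abs] at h2
    refine h2.trans ?_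
    have h3 : (∫ x : EuclideanSpace ℝ (Fin d), (w (x j) - p.eval (x j)) ^ 2 ∂lam) / δ ≤ δ := by
      rw [div_le_iff₀ hδ, ← pow_two]; exact hp.le
    calc _ ≤ ‖G‖ * (δ + δ * ∫ x, ev P x ^ 2 ∂lam) := by gcongr
      _ = _ := by ring
  have gen : ∀ (w : C(ℝ, ℝ)) (hw : ∀ x, |w x| ≤ 1) (j : Fin d),
      (∀ ε : ℝ, 0 < ε → ∃ p : Polynomial ℝ,
        ∫ t, (w t - p.eval t) ^ 2 ∂(μ.map (fun x => x j)) < ε) →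
      ∀ G, S G → S (lift w hw j * G) := by
    intro w hw j happ G hG P
    set K := ‖G‖ * (1 + ∫ x, ev P x ^ 2 ∂μ) + ‖G‖ * (1 + ∫ x, ev P x ^ 2 ∂ν) with hK
    have hb : ∀ δ : ℝ, 0 < δ → |∫ x, (lift w hw j * G) x * ev P x ∂μ -
        ∫ x, (lift w hw j * G) x * ev P x ∂ν| ≤ δ * K := by
      intro δ hδ
      obtain ⟨p, hp⟩ := happ (δ ^ 2) (by positivity)
      have h1 := key μ inferInstance hIμ w hw j p δ hδ hp G P
      have h2 := key ν inferInstance hIν w hw j p δ hδ (by rw [hmarg]; exact hp) G P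
      have h3 := hG (p.toMvPolynomial j * P)
      rw [hK, mul_add]
      rw [abs_le] at h1 h2 ⊢
      constructor <;> linarith [h1.1, h1.2, h2.1, h2.2]
    have hz : |∫ x, (lift w hw j * G) x * ev P x ∂μ -
        ∫ x, (lift w hw j * G) x * ev P x ∂ν| ≤ 0 := by
      have ht : Tendsto (fun δ : ℝ => δ * K) (𝓝[>] 0) (𝓝 0) := by
        have : Tendsto (fun δ : ℝ => δ * K) (𝓝 0) (𝓝 (0 * K)) := tendsto_id.mul_const K
        rw [zero_mul] at this
        exact this.mono_left nhdsWithin_le_nhds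
      refine ge_of_tendsto ht ?_
      filter_upwards [self_mem_nhdsWithin] with δ hδ
      exact hb δ hδ
    exact sub_eq_zero.mp (abs_nonpos_iff.mp hz)
  have hSadd : ∀ f g, S f → S g → S (f + g) := by
    intro f g hf hg P
    simp only [BoundedContinuousFunction.add_apply, add_mul]
    rw [integral_add (hGP μ hIμ f P) (hGP μ hIμ g P), integral_add (hGP ν hIν f P) (hGP ν hIν g P),
      hf, hg]
  have hSsmul : ∀ (c : ℝ) f, S f → S (c • f) := by
    intro c f hf P
    simp only [BoundedContinuousFunction.smul_apply, smul_eq_mul, mul_assoc]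
    rw [integral_const_mul, integral_const_mul, hf]
  have hS1 : S 1 := by
    intro P
    simpa using hev P
  let A : StarSubalgebra ℝ (EuclideanSpace ℝ (Fin d) →ᵇ ℝ) :=
    { carrier := {f | ∀ G, S G → S (f * G)}
      mul_mem' := fun {f g} hf hg G hG => by rw [mul_assoc]; exact hf _ (hg _ hG)
      one_mem' := fun G hG => by rw [one_mul]; exact hG
      add_mem' := fun {f g} hf hg G hG => by rw [add_mul]; exact hSadd _ _ (hf _ hG) (hg _ hG)
      zero_mem' := fun G hG => by
        have := hSsmul 0 G hG
        rw [zero_smul] at this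
        rw [zero_mul]; exact this
      algebraMap_mem' := fun c G hG => by
        rw [← Algebra.smul_def]; exact hSsmul c G hG
      star_mem' := fun {f} hf => by
        have : star f = f := by ext x; simp
        rw [this]; exact hf }
  have hApp := fun j => pt_L2 (μ.map (fun x => x j)) (hmapI μ hIμ j) (hdet j)
  have hUA : ∀ j, lift ptU ptU_abs j ∈ A := fun j => gen _ _ j (fun ε hε => (hApp j ε hε).1)
  have hVA : ∀ j, lift ptV ptV_abs j ∈ A := fun j => gen _ _ j (fun ε hε => (hApp j ε hε).2)
  refine ext_of_forall_mem_subalgebra_integral_eq_of_pseudoEMetric_complete_countable (𝕜 := ℝ)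
    (A := A) ?_ ?_
  · intro x y hxy
    obtain ⟨j, hj⟩ : ∃ j, x j ≠ y j := by
      by_contra! h
      exact hxy (by ext i; exact h i)
    by_cases hu : ptU (x j) = ptU (y j)
    · refine ⟨_, ⟨_, ⟨lift ptV ptV_abs j, hVA j, rfl⟩, rfl⟩, ?_⟩
      change ptV (x j) ≠ ptV (y j)
      intro hv
      apply hj
      have e : ∀ t, ptV t = t * ptU t := fun t => by rw [ptV_apply, ptU_apply]; ring
      rw [e, e, hu] at hv
      refine mul_right_cancel₀ ?_ hv
      rw [ptU_apply]; positivity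
    · exact ⟨_, ⟨_, ⟨lift ptU ptU_abs j, hUA j, rfl⟩, rfl⟩, hu⟩
  · intro g hg
    have := hg 1 hS1 1
    simpa [ev] using this
end

section
/- Let P and Q be Borel probability measures on ℝ^d, let A ⊂ 𝕊^{d-1} be a Borel set with positive surface measure, and suppose π_u(Q) = π_u(P) for all u ∈ A. Assume there are linearly independent u_1,…,u_d ∈ A such that each π_{u_j}(P) has finite moments of all orders. Then for every m ≥ 1 and every u ∈ ℝ^d, ∫ ⟨u,x⟩^m dQ(x) = ∫ ⟨u,x⟩^m dP(x). -/
open MeasureTheory Filter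
open scoped InnerProductSpace ENNReal Topology BigOperators

/-- A measurable set meeting every line through the origin in a Lebesgue-null set is Haar-null. -/
lemma aux_null_of_rays {E : Type*} [NormedAddCommGroup E] [NormedSpace ℝ E]
    [FiniteDimensional ℝ E] [MeasurableSpace E] [BorelSpace E] (μ : Measure E)
    [μ.IsAddHaarMeasure] (Z : Set E) (hZ : MeasurableSet Z)
    (h : ∀ x : E, (volume : Measure ℝ) {r : ℝ | r • x ∈ Z} = 0) : μ Z = 0 := by
  have hS : MeasurableSet {p : E × ℝ | p.2 • p.1 ∈ Z} :=
    (by fun_prop : Measurable (fun p : E × ℝ => p.2 • p.1)) hZ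
  have hS' : MeasurableSet {p : ℝ × E | p.1 • p.2 ∈ Z} :=
    (by fun_prop : Measurable (fun p : ℝ × E => p.1 • p.2)) hZ
  have h1 : (μ.prod (volume : Measure ℝ)) {p : E × ℝ | p.2 • p.1 ∈ Z} = 0 := by
    rw [Measure.measure_prod_null hS]
    exact Eventually.of_forall h
  have h2 : ((volume : Measure ℝ).prod μ) {p : ℝ × E | p.1 • p.2 ∈ Z} = 0 := by
    rw [← Measure.prod_swap, Measure.map_apply measurable_swap hS']
    exact h1
  have h3 := Measure.measure_ae_null_of_prod_null h2
  have h4 : ∀ᵐ r : ℝ, r ≠ 0 := by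
    simp [ae_iff]
  obtain ⟨r, hr, hr0⟩ := (h3.and h4).exists
  have h5 : μ ((fun x => r • x) ⁻¹' Z) = 0 := hr
  rw [Measure.addHaar_preimage_smul μ hr0] at h5
  rcases mul_eq_zero.1 h5 with h6 | h6
  · exfalso
    rw [ENNReal.ofReal_eq_zero] at h6
    have : 0 < |(r ^ Module.finrank ℝ E)⁻¹| := by positivity
    linarith
  · exact h6

lemma aux_normalize {E : Type*} [NormedAddCommGroup E] [NormedSpace ℝ E] (x y : E)
    (hx : 1 ≤ ‖x‖) (hy : 1 ≤ ‖y‖) : ‖‖x‖⁻¹ • x - ‖y‖⁻¹ • y‖ ≤ 2 * ‖x - y‖ := by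
  have hx0 : ‖x‖ ≠ 0 := by positivity
  have hy0 : ‖y‖ ≠ 0 := by positivity
  have e : ‖x‖⁻¹ • x - ‖y‖⁻¹ • y = ‖x‖⁻¹ • (x - y) + (‖x‖⁻¹ * (‖y‖ - ‖x‖)) • (‖y‖⁻¹ • y) := by
    have : ‖x‖⁻¹ * (‖y‖ - ‖x‖) * ‖y‖⁻¹ = ‖x‖⁻¹ - ‖y‖⁻¹ := by field_simp
    rw [smul_smul, this, sub_smul, smul_sub]; abel
  have hi : ‖x‖⁻¹ ≤ 1 := inv_le_one_of_one_le₀ hx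
  have hyn : ‖(‖y‖⁻¹ • y)‖ = 1 := by rw [norm_smul]; simp [hy0]
  have hd : |‖y‖ - ‖x‖| ≤ ‖x - y‖ := by
    rw [abs_sub_comm]; exact abs_norm_sub_norm_le x y
  rw [e]
  refine (norm_add_le _ _).trans ?_
  rw [norm_smul, norm_smul, hyn, Real.norm_eq_abs, Real.norm_eq_abs, abs_mul,
    abs_of_nonneg (by positivity : 0 ≤ ‖x‖⁻¹)]
  have h1 : ‖x‖⁻¹ * ‖x - y‖ ≤ 1 * ‖x - y‖ := by gcongr
  have h2 : ‖x‖⁻¹ * |‖y‖ - ‖x‖| ≤ 1 * ‖x - y‖ := by gcongr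
  linarith

lemma aux_null (d : ℕ) (F : EuclideanSpace ℝ (Fin d) → ℝ) (hFm : Measurable F) (m : ℕ)
    (hF : ∀ (c : ℝ) v, F (c • v) = c ^ m * F v)
    (hline : ∀ a b, ∃ p : Polynomial ℝ, ∀ t : ℝ, F (a + t • b) = p.eval t)
    (v0 : EuclideanSpace ℝ (Fin d)) (hv0 : v0 ≠ 0) (hFv0 : F v0 ≠ 0) :
    μH[(d : ℝ) - 1] ({a | F a = 0} ∩ Metric.sphere (0 : EuclideanSpace ℝ (Fin d)) 1) = 0 := by
  obtain ⟨w, hw, hFw⟩ : ∃ w : EuclideanSpace ℝ (Fin d), ‖w‖ = 1 ∧ F w ≠ 0 := by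
    refine ⟨‖v0‖⁻¹ • v0, ?_, ?_⟩
    · rw [norm_smul]; simp [hv0]
    · rw [hF]; exact mul_ne_zero (pow_ne_zero _ (by simpa using hv0)) hFv0
  have hw0 : w ≠ 0 := by rintro rfl; simp at hw
  obtain ⟨n, rfl⟩ : ∃ n, d = n + 1 := by
    cases d with
    | zero => exact absurd (Subsingleton.elim _ _) hw0
    | succ n => exact ⟨n, rfl⟩
  let W := (ℝ ∙ w)ᗮ
  have : Fact (Module.finrank ℝ (EuclideanSpace ℝ (Fin (n + 1))) = n + 1) := ⟨by simp⟩
  have hdim : Module.finrank ℝ W = n := Submodule.finrank_orthogonal_span_singleton hw0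
  have hHaar : Measure.IsAddHaarMeasure (μH[(n : ℝ)] : Measure W) := by
    have h := MeasureTheory.isAddHaarMeasure_hausdorffMeasure (E := W)
    have e : ((Module.finrank ℝ W : ℕ) : ℝ) = n := by exact_mod_cast hdim
    rwa [e] at h
  have hWo : ∀ y : W, ⟪w, (y : EuclideanSpace ℝ (Fin (n + 1)))⟫_ℝ = 0 := fun y =>
    Submodule.mem_orthogonal_singleton_iff_inner_right.1 y.2
  have hnorm : ∀ y : W, 1 ≤ ‖w + y‖ := by
    intro y
    have h1 : ⟪w, w + y⟫_ℝ = 1 := by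
      rw [inner_add_right, hWo, real_inner_self_eq_norm_sq, hw]; norm_num
    have h2 := real_inner_le_norm w (w + y)
    rw [h1, hw] at h2; linarith
  let B : Set W := {y | F (w + y) = 0}
  have hBm : MeasurableSet B :=
    (hFm.comp (by fun_prop : Measurable fun y : W => w + (y : EuclideanSpace ℝ (Fin (n + 1)))))
      (measurableSet_singleton 0)
  have hB : μH[(n : ℝ)] B = 0 := by
    refine aux_null_of_rays _ B hBm fun y => ?_
    obtain ⟨p, hp⟩ := hline w y
    have hp0 : p ≠ 0 := by
      rintro rfl
      have := hp 0
      simp at this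
      exact hFw this
    refine Set.Finite.measure_zero ((p.roots.toFinset.finite_toSet).subset ?_) _
    intro r hr
    have : F (w + r • (y : EuclideanSpace ℝ (Fin (n + 1)))) = 0 := hr
    rw [hp] at this
    simp [hp0, this]
  let g : W → EuclideanSpace ℝ (Fin (n + 1)) := fun y => ‖w + y‖⁻¹ • (w + y)
  have hg : LipschitzWith 2 g := by
    refine LipschitzWith.of_dist_le_mul fun x y => ?_
    rw [dist_eq_norm, dist_eq_norm]
    refine (aux_normalize _ _ (hnorm x) (hnorm y)).trans (le_of_eq ?_)
    simp
  have hg' : LipschitzWith 2 (fun y => - g y) := hg.neg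
  have hn : (0 : ℝ) ≤ n := by positivity
  have null1 : μH[(n : ℝ)] (g '' B) = 0 := by
    have := hg.hausdorffMeasure_image_le hn B
    rw [hB, mul_zero] at this; exact le_antisymm this bot_le
  have null2 : μH[(n : ℝ)] ((fun y => - g y) '' B) = 0 := by
    have := hg'.hausdorffMeasure_image_le hn B
    rw [hB, mul_zero] at this; exact le_antisymm this bot_le
  have null3 : μH[(n : ℝ)] ((Subtype.val : W → EuclideanSpace ℝ (Fin (n + 1))) ''
      Metric.sphere (0 : W) 1) = 0 := by
    rw [(isometry_subtype_coe).hausdorffMeasure_image (Or.inl hn)]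
    exact Measure.addHaar_sphere_of_ne_zero _ _ one_ne_zero
  have e : ((n + 1 : ℕ) : ℝ) - 1 = n := by push_cast; ring
  rw [e]
  refine measure_mono_null ?_ (measure_union_null (measure_union_null null1 null2) null3)
  rintro a ⟨ha, has⟩
  have ha1 : ‖a‖ = 1 := by simpa using has
  replace ha : F a = 0 := ha
  set c := ⟪w, a⟫_ℝ with hc
  by_cases hc0 : c = 0
  · right
    refine ⟨⟨a, Submodule.mem_orthogonal_singleton_iff_inner_right.2 hc0⟩, ?_, rfl⟩
    simpa using ha1
  · left
    have hyW : c⁻¹ • a - w ∈ W := by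
      refine Submodule.mem_orthogonal_singleton_iff_inner_right.2 ?_
      rw [inner_sub_right, inner_smul_right, ← hc, real_inner_self_eq_norm_sq, hw]
      field_simp; norm_num
    have hyB : (⟨c⁻¹ • a - w, hyW⟩ : W) ∈ B := by
      change F (w + (c⁻¹ • a - w)) = 0
      rw [add_sub_cancel, hF, ha, mul_zero]
    have hgy : g ⟨c⁻¹ • a - w, hyW⟩ = (|c| * c⁻¹) • a := by
      change ‖w + (c⁻¹ • a - w)‖⁻¹ • (w + (c⁻¹ • a - w)) = _
      rw [add_sub_cancel, norm_smul, ha1, mul_one, norm_inv, inv_inv, smul_smul,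
        Real.norm_eq_abs]
    rcases lt_or_gt_of_ne hc0 with h | h
    · right
      refine ⟨_, hyB, ?_⟩
      simp only
      rw [hgy, abs_of_neg h, neg_mul, mul_inv_cancel₀ hc0]; simp
    · left
      refine ⟨_, hyB, ?_⟩
      rw [hgy, abs_of_pos h, mul_inv_cancel₀ hc0]; simp

lemma aux_integrable (d : ℕ) (P : Measure (EuclideanSpace ℝ (Fin d))) [IsProbabilityMeasure P]
    (u : Fin d → EuclideanSpace ℝ (Fin d)) (hu : LinearIndependent ℝ u)
    (hmom : ∀ j, ∀ m : ℕ,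
      Integrable (fun t => |t| ^ m) (P.map (fun x => ⟪u j, x⟫_ℝ)))
    (v : EuclideanSpace ℝ (Fin d)) (m : ℕ) : Integrable (fun x => ⟪v, x⟫_ℝ ^ m) P := by
  rcases Nat.eq_zero_or_pos m with rfl | hm
  · simp
  have key : ∀ v : EuclideanSpace ℝ (Fin d), MemLp (fun x => ⟪v, x⟫_ℝ) m P := by
    intro v
    have hv : v ∈ Submodule.span ℝ (Set.range u) := by
      rw [hu.span_eq_top_of_card_eq_finrank' (by simp)]; trivial
    induction hv using Submodule.span_induction with
    | mem x hx =>
      obtain ⟨j, rfl⟩ := hx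
      have h1 := (integrable_map_measure (by fun_prop) (by fun_prop)).1 (hmom j m)
      refine (integrable_norm_rpow_iff (by fun_prop) (by simp; omega) (by simp)).1 ?_
      simpa [Function.comp_def] using h1
    | zero => simp
    | add x y _ _ hx hy => simp only [inner_add_left]; exact hx.add hy
    | smul c x _ hx => simpa [inner_smul_left] using hx.const_mul c
  have h2 := (key v).integrable_norm_pow (by omega)
  refine h2.mono' (by fun_prop) (Eventually.of_forall fun x => ?_)
  rw [norm_pow]

lemma aux_line (d : ℕ) (P : Measure (EuclideanSpace ℝ (Fin d)))
    (hint : ∀ (v : EuclideanSpace ℝ (Fin d)) (m : ℕ), Integrable (fun x => ⟪v, x⟫_ℝ ^ m) P)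
    (m : ℕ) (a b : EuclideanSpace ℝ (Fin d)) :
    ∃ p : Polynomial ℝ, ∀ t : ℝ, (∫ x, ⟪a + t • b, x⟫_ℝ ^ m ∂P) = p.eval t := by
  have hL2 : ∀ (v : EuclideanSpace ℝ (Fin d)) (k : ℕ), MemLp (fun x => ⟪v, x⟫_ℝ ^ k) 2 P := by
    intro v k
    rw [memLp_two_iff_integrable_sq (by fun_prop)]
    simpa [← pow_mul] using hint v (k * 2)
  have hprod : ∀ k l : ℕ, Integrable (fun x => ⟪a, x⟫_ℝ ^ k * ⟪b, x⟫_ℝ ^ l) P :=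
    fun k l => (hL2 a k).integrable_mul (hL2 b l)
  refine ⟨∑ k ∈ Finset.range (m + 1),
    Polynomial.C ((∫ x, ⟪a, x⟫_ℝ ^ k * ⟪b, x⟫_ℝ ^ (m - k) ∂P) * (m.choose k))
      * Polynomial.X ^ (m - k), fun t => ?_⟩
  have e : ∀ x, ⟪a + t • b, x⟫_ℝ ^ m = ∑ k ∈ Finset.range (m + 1),
      (⟪a, x⟫_ℝ ^ k * ⟪b, x⟫_ℝ ^ (m - k)) * (m.choose k * t ^ (m - k)) := by
    intro x
    rw [inner_add_left, real_inner_smul_left, add_pow]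
    refine Finset.sum_congr rfl fun k _ => ?_
    rw [mul_pow]; ring
  simp_rw [e]
  rw [integral_finsetSum _ (fun k _ => (hprod k (m - k)).mul_const _), Polynomial.eval_finsetSum]
  refine Finset.sum_congr rfl fun k _ => ?_
  rw [integral_mul_const]
  simp [mul_assoc]

theorem stmt11 (d : ℕ) (P Q : Measure (EuclideanSpace ℝ (Fin d)))
    [IsProbabilityMeasure P] [IsProbabilityMeasure Q]
    (A : Set (EuclideanSpace ℝ (Fin d))) (hA : MeasurableSet A)
    (hAs : A ⊆ Metric.sphere (0 : EuclideanSpace ℝ (Fin d)) 1)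
    (hApos : 0 < μH[(d : ℝ) - 1] A)
    (hproj : ∀ u ∈ A, Q.map (fun x => ⟪u, x⟫_ℝ) = P.map (fun x => ⟪u, x⟫_ℝ))
    (u : Fin d → EuclideanSpace ℝ (Fin d)) (huA : ∀ j, u j ∈ A)
    (hu : LinearIndependent ℝ u)
    (hmom : ∀ j, ∀ m : ℕ,
      Integrable (fun t => |t| ^ m) (P.map (fun x => ⟪u j, x⟫_ℝ))) :
    ∀ (m : ℕ), 1 ≤ m → ∀ v : EuclideanSpace ℝ (Fin d),
      (∫ x, ⟪v, x⟫_ℝ ^ m ∂Q) = ∫ x, ⟪v, x⟫_ℝ ^ m ∂P := by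
  intro m hm v
  have hmomQ : ∀ j, ∀ m : ℕ,
      Integrable (fun t => |t| ^ m) (Q.map (fun x => ⟪u j, x⟫_ℝ)) := by
    intro j m; rw [hproj _ (huA j)]; exact hmom j m
  have hP := aux_integrable d P u hu hmom
  have hQ := aux_integrable d Q u hu hmomQ
  by_contra hne
  let F : EuclideanSpace ℝ (Fin d) → ℝ := fun v =>
    (∫ x, ⟪v, x⟫_ℝ ^ m ∂Q) - ∫ x, ⟪v, x⟫_ℝ ^ m ∂P
  have hsm : StronglyMeasurable
      (fun p : EuclideanSpace ℝ (Fin d) × EuclideanSpace ℝ (Fin d) => ⟪p.1, p.2⟫_ℝ ^ m) :=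
    (by fun_prop : Continuous
      (fun p : EuclideanSpace ℝ (Fin d) × EuclideanSpace ℝ (Fin d) =>
        ⟪p.1, p.2⟫_ℝ ^ m)).stronglyMeasurable
  have hFm : Measurable F :=
    (hsm.integral_prod_right' (ν := Q)).measurable.sub
      (hsm.integral_prod_right' (ν := P)).measurable
  have hF : ∀ (c : ℝ) v, F (c • v) = c ^ m * F v := by
    intro c v
    simp only [F, real_inner_smul_left, mul_pow, integral_const_mul]
    ring
  have hline : ∀ a b, ∃ p : Polynomial ℝ, ∀ t : ℝ, F (a + t • b) = p.eval t := by
    intro a b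
    obtain ⟨p, hp⟩ := aux_line d P hP m a b
    obtain ⟨q, hq⟩ := aux_line d Q hQ m a b
    refine ⟨q - p, fun t => ?_⟩
    rw [Polynomial.eval_sub, ← hp, ← hq]
  have hFv : F v ≠ 0 := sub_ne_zero.2 hne
  have hv0 : v ≠ 0 := by
    rintro rfl
    apply hFv
    have := hF 0 0
    rw [zero_pow (by omega), zero_smul, zero_mul] at this
    exact this
  have hnull := aux_null d F hFm m hF hline v hv0 hFv
  refine hApos.ne' (measure_mono_null ?_ hnull)
  intro a ha
  refine ⟨?_, hAs ha⟩
  change (∫ x, ⟪a, x⟫_ℝ ^ m ∂Q) - ∫ x, ⟪a, x⟫_ℝ ^ m ∂P = 0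
  have h1 : ∀ ν : Measure (EuclideanSpace ℝ (Fin d)),
      (∫ x, ⟪a, x⟫_ℝ ^ m ∂ν) = ∫ t, t ^ m ∂(ν.map (fun x => ⟪a, x⟫_ℝ)) := by
    intro ν
    rw [integral_map (by fun_prop) (by fun_prop)]
  rw [h1 Q, h1 P, hproj a ha, sub_self]
end
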